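/- arXiv:2005.02017 — 2 statements merged into one kernel-verified Lean document; each statement's English description precedes it below -/
import Mathlib

section
/- Assume char F ≠ 2. Then: (i) P(x(d)) = 4d for every d ∈ Fˣ; (ii) a regular element (x,y) ∈ V lies in the G-orbit of x(d) if and only if P(x,y) = d·c² for some c ∈ Fˣ; consequently every regular element lies in the G-orbit of x(d) for some d ∈ Fˣ, and two regular elements (x,y), (x',y') lie in the same G-orbit if and only if P(x,y) = P(x',y')·c² for some c ∈ Fˣ. -/
open Matrix

/-- `2 × 2` matrices over `F`. -/
abbrev M2 (F : Type*) := Matrix (Fin 2) (Fin 2) F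

/-- The right action of `G = GL₂(F) × GL₂(F) × GL₂(F)` on `V = M₂(F) × M₂(F)`. -/
noncomputable def act {F : Type*} [Field F] (v : M2 F × M2 F)
    (g : GL (Fin 2) F × GL (Fin 2) F × GL (Fin 2) F) : M2 F × M2 F :=
  ((((g.2.2 : M2 F) 0 0) • (((g.1⁻¹ : GL (Fin 2) F) : M2 F) * v.1 * (g.2.1 : M2 F)) +
      ((g.2.2 : M2 F) 1 0) • (((g.1⁻¹ : GL (Fin 2) F) : M2 F) * v.2 * (g.2.1 : M2 F))),
   (((g.2.2 : M2 F) 0 1) • (((g.1⁻¹ : GL (Fin 2) F) : M2 F) * v.1 * (g.2.1 : M2 F)) +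
      ((g.2.2 : M2 F) 1 1) • (((g.1⁻¹ : GL (Fin 2) F) : M2 F) * v.2 * (g.2.1 : M2 F))))

/-- `P₀(x,y) = x·y^ι − y·x^ι`, where `m^ι` is the adjugate. -/
def P0 {F : Type*} [Field F] (v : M2 F × M2 F) : M2 F :=
  v.1 * v.2.adjugate - v.2 * v.1.adjugate

/-- The fundamental relative invariant `P(x,y) = −det(P₀(x,y))`. -/
def Pinv {F : Type*} [Field F] (v : M2 F × M2 F) : F := - (P0 v).det

/-- The regular representative `x(d) = (I₂, δ_d)` with `δ_d = [[0,d],[1,0]]`. -/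
def xd {F : Type*} [Field F] (d : F) : M2 F × M2 F := ((1 : M2 F), !![0, d; 1, 0])

/-- Same orbit. -/
def Rel5 {F : Type*} [Field F] (v w : M2 F × M2 F) : Prop :=
  ∃ g : GL (Fin 2) F × GL (Fin 2) F × GL (Fin 2) F, act v g = w

theorem act_mul5 {F : Type*} [Field F] (v : M2 F × M2 F)
    (g h : GL (Fin 2) F × GL (Fin 2) F × GL (Fin 2) F) :
    act (act v g) h = act v (g * h) := by
  obtain ⟨x, y⟩ := v
  obtain ⟨g1, g2, g3⟩ := g
  obtain ⟨h1, h2, h3⟩ := h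
  simp only [act, Prod.mk_mul_mk, _root_.mul_inv_rev, Units.val_mul, Matrix.mul_add, Matrix.add_mul,
    Matrix.mul_smul, Matrix.smul_mul, smul_add, smul_smul, Matrix.mul_assoc,
    Matrix.mul_apply (M := (g3 : M2 F)), Fin.sum_univ_two, add_smul]
  refine Prod.ext ?_ ?_
  · simp only [mul_comm ((h3 : M2 F) _ _)]
    abel
  · simp only [mul_comm ((h3 : M2 F) _ _)]
    abel

theorem act_one5 {F : Type*} [Field F] (v : M2 F × M2 F) : act v 1 = v := by
  simp [act]

theorem Rel5.trans {F : Type*} [Field F] {u v w : M2 F × M2 F} (h : Rel5 u v) (k : Rel5 v w) :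
    Rel5 u w := by
  obtain ⟨g, rfl⟩ := h
  obtain ⟨g', rfl⟩ := k
  exact ⟨g * g', (act_mul5 _ _ _).symm⟩

theorem Rel5.symm {F : Type*} [Field F] {u v : M2 F × M2 F} (h : Rel5 u v) : Rel5 v u := by
  obtain ⟨g, rfl⟩ := h
  exact ⟨g⁻¹, by rw [act_mul5, mul_inv_cancel, act_one5]⟩

/-- Criterion for equivalence without inverses. -/
theorem rel5_of {F : Type*} [Field F] (x y x' y' A B C : M2 F) (hA : A.det ≠ 0) (hB : B.det ≠ 0)
    (hC : C.det ≠ 0) (h1 : (C 0 0 • x + C 1 0 • y) * B = A * x')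
    (h2 : (C 0 1 • x + C 1 1 • y) * B = A * y') : Rel5 (x, y) (x', y') := by
  refine ⟨(Matrix.GeneralLinearGroup.mkOfDetNeZero A hA,
    Matrix.GeneralLinearGroup.mkOfDetNeZero B hB,
    Matrix.GeneralLinearGroup.mkOfDetNeZero C hC), ?_⟩
  have hi : ∀ m : M2 F, (((Matrix.GeneralLinearGroup.mkOfDetNeZero A hA)⁻¹ : GL (Fin 2) F) : M2 F)
      * (A * m) = m := by
    intro m
    rw [← Matrix.mul_assoc]
    have : (((Matrix.GeneralLinearGroup.mkOfDetNeZero A hA)⁻¹ : GL (Fin 2) F) : M2 F) * A = 1 :=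
      Units.inv_mul (Matrix.GeneralLinearGroup.mkOfDetNeZero A hA)
    rw [this, Matrix.one_mul]
  refine Prod.ext ?_ ?_
  · rw [← hi x', ← h1]
    simp only [act, Matrix.mul_add, Matrix.add_mul, Matrix.mul_smul, Matrix.smul_mul,
      Matrix.mul_assoc]
    rfl
  · rw [← hi y', ← h2]
    simp only [act, Matrix.mul_add, Matrix.add_mul, Matrix.mul_smul, Matrix.smul_mul,
      Matrix.mul_assoc]
    rfl

theorem P0_lin5 {F : Type*} [Field F] (x y : M2 F) (a b c d : F) :
    P0 (a • x + c • y, b • x + d • y) = (a * d - b * c) • P0 (x, y) := by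
  ext i j
  fin_cases i <;> fin_cases j <;>
    simp [P0, Matrix.adjugate_fin_two, Matrix.mul_apply, Fin.sum_univ_two] <;> ring

theorem P0_AB5 {F : Type*} [Field F] (x y A B : M2 F) :
    P0 (A * x * B, A * y * B) = B.det • (A * P0 (x, y) * A.adjugate) := by
  have h : ∀ p q : M2 F, A * p * B * (A * q * B).adjugate
      = B.det • (A * (p * q.adjugate) * A.adjugate) := by
    intro p q
    rw [Matrix.adjugate_mul_distrib, Matrix.adjugate_mul_distrib]
    calc A * p * B * (B.adjugate * (q.adjugate * A.adjugate))
        = A * p * (B * B.adjugate) * (q.adjugate * A.adjugate) := by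
          simp only [Matrix.mul_assoc]
      _ = _ := by
          rw [Matrix.mul_adjugate]
          simp [Matrix.mul_assoc]
  simp only [P0, h, Matrix.mul_sub, Matrix.sub_mul, smul_sub]

theorem Pinv_act5 {F : Type*} [Field F] (v : M2 F × M2 F)
    (g : GL (Fin 2) F × GL (Fin 2) F × GL (Fin 2) F) :
    ∃ c : Fˣ, Pinv (act v g) = Pinv v * (c : F) ^ 2 := by
  refine ⟨Matrix.GeneralLinearGroup.det g.2.2 * Matrix.GeneralLinearGroup.det g.2.1 *
    Matrix.GeneralLinearGroup.det g.1⁻¹, ?_⟩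
  simp only [Pinv, act]
  rw [P0_lin5, P0_AB5]
  simp only [Matrix.det_smul, Matrix.det_mul, Matrix.det_adjugate, Fintype.card_fin, Units.val_mul,
    Matrix.GeneralLinearGroup.val_det_apply]
  rw [Matrix.det_fin_two (g.2.2 : M2 F)]
  ring

theorem Pinv_xd5 {F : Type*} [Field F] (d : F) : Pinv (xd d) = 4 * d := by
  simp [Pinv, P0, xd, Matrix.adjugate_fin_two, Matrix.det_fin_two]
  ring

theorem xd_sq5 {F : Type*} [Field F] (d s : F) (hs : s ≠ 0) : Rel5 (xd d) (xd (d * s ^ 2)) := by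
  refine rel5_of _ _ _ _ !![1, 0; 0, s] !![1, 0; 0, s] !![1, 0; 0, s] (by simpa [Matrix.det_fin_two])
    (by simpa [Matrix.det_fin_two]) (by simpa [Matrix.det_fin_two]) ?_ ?_
  · simp
  · ext i j
    fin_cases i <;> fin_cases j <;> simp [Matrix.mul_apply, Fin.sum_univ_two] <;> ring

theorem traceless5 {F : Type*} [Field F] (h2 : (2 : F) ≠ 0) (a b c : F) (he : a ^ 2 + b * c ≠ 0) :
    Rel5 ((1 : M2 F), !![a, b; c, -a]) (xd (a ^ 2 + b * c)) := by
  have key : ∀ p q : F, p * (c * p - a * q) - q * (a * p + b * q) ≠ 0 →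
      Rel5 ((1 : M2 F), !![a, b; c, -a]) (xd (a ^ 2 + b * c)) := by
    intro p q h
    have hd : (!![p, a * p + b * q; q, c * p - a * q] : M2 F).det ≠ 0 := by
      rw [Matrix.det_fin_two]
      simp only [Matrix.of_apply, Matrix.cons_val_zero, Matrix.cons_val_one, Matrix.cons_val',
        Matrix.cons_val_fin_one]
      intro h'
      apply h
      linear_combination h'
    refine rel5_of _ _ _ _ !![p, a * p + b * q; q, c * p - a * q]
      !![p, a * p + b * q; q, c * p - a * q] 1 hd hd (by simp) ?_ ?_
    · simp
    · ext i j
      fin_cases i <;> fin_cases j <;> simp [Matrix.mul_apply, Fin.sum_univ_two] <;> ring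
  by_cases hc : c = 0
  · by_cases hb : b = 0
    · have ha : a ≠ 0 := by
        rintro rfl
        simp [hb] at he
      apply key 1 1
      intro h
      have : 2 * a = 0 := by rw [hc, hb] at h; linear_combination -h
      exact (mul_ne_zero h2 ha) this
    · apply key 0 1
      simpa using hb
  · apply key 1 0
    simpa using hc

theorem one5 {F : Type*} [Field F] (h2 : (2 : F) ≠ 0) (y : M2 F) (h : Pinv ((1 : M2 F), y) ≠ 0) :
    ∃ d : Fˣ, Rel5 ((1 : M2 F), y) (xd (d : F)) := by
  have he : ((y 0 0 - y 1 1) / 2) ^ 2 + y 0 1 * y 1 0 ≠ 0 := by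
    intro h'
    apply h
    have : Pinv ((1 : M2 F), y) = 4 * (((y 0 0 - y 1 1) / 2) ^ 2 + y 0 1 * y 1 0) := by
      simp [Pinv, P0, Matrix.adjugate_fin_two, Matrix.det_fin_two]
      field_simp
      ring
    rw [this, h', mul_zero]
  refine ⟨Units.mk0 _ he, Rel5.trans ?_ (traceless5 h2 _ _ _ he)⟩
  refine rel5_of _ _ _ _ 1 1 !![1, -((y 0 0 + y 1 1) / 2); 0, 1] (by simp) (by simp)
    (by simp [Matrix.det_fin_two]) ?_ ?_
  · simp
  · ext i j
    fin_cases i <;> fin_cases j <;> simp <;> field_simp <;> ring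

theorem Pinv_rel5 {F : Type*} [Field F] {v w : M2 F × M2 F} (h : Rel5 v w) :
    ∃ c : Fˣ, Pinv w = Pinv v * (c : F) ^ 2 := by
  obtain ⟨g, rfl⟩ := h
  exact Pinv_act5 v g

theorem Pinv_ne5 {F : Type*} [Field F] {v w : M2 F × M2 F} (h : Rel5 v w) (hv : Pinv v ≠ 0) :
    Pinv w ≠ 0 := by
  obtain ⟨c, hc⟩ := Pinv_rel5 h
  rw [hc]
  exact mul_ne_zero hv (pow_ne_zero _ c.ne_zero)

theorem inv5 {F : Type*} [Field F] (h2 : (2 : F) ≠ 0) (x y : M2 F) (h : Pinv (x, y) ≠ 0)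
    (hx : x.det ≠ 0) : ∃ d : Fˣ, Rel5 (x, y) (xd (d : F)) := by
  have hr : Rel5 (x, y) ((1 : M2 F), x⁻¹ * y) := by
    refine rel5_of _ _ _ _ x 1 1 hx (by simp) (by simp) ?_ ?_
    · simp
    · simp [Matrix.mul_nonsing_inv_cancel_left, hx]
  obtain ⟨d, hd⟩ := one5 h2 _ (Pinv_ne5 hr h)
  exact ⟨d, hr.trans hd⟩

theorem all5 {F : Type*} [Field F] (h2 : (2 : F) ≠ 0) (v : M2 F × M2 F) (h : Pinv v ≠ 0) :
    ∃ d : Fˣ, Rel5 v (xd (d : F)) := by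
  obtain ⟨x, y⟩ := v
  by_cases hx : x.det = 0
  · by_cases hy : y.det = 0
    · have hr : Rel5 (x, y) (x + y, y) := by
        refine rel5_of _ _ _ _ 1 1 !![1, 0; 1, 1] (by simp) (by simp)
          (by simp [Matrix.det_fin_two]) ?_ ?_ <;> simp
      have hs : (x + y).det ≠ 0 := by
        intro hs
        apply h
        have : Pinv (x, y) = ((x + y).det - x.det - y.det) ^ 2 - 4 * x.det * y.det := by
          simp [Pinv, P0, Matrix.adjugate_fin_two, Matrix.det_fin_two, Matrix.mul_apply,
            Fin.sum_univ_two]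
          ring
        rw [this, hs, hx, hy]
        ring
      obtain ⟨d, hd⟩ := inv5 h2 _ _ (Pinv_ne5 hr h) hs
      exact ⟨d, hr.trans hd⟩
    · have hr : Rel5 (x, y) (y, x) := by
        refine rel5_of _ _ _ _ 1 1 !![0, 1; 1, 0] (by simp) (by simp)
          (by simp [Matrix.det_fin_two]) ?_ ?_ <;> simp
      obtain ⟨d, hd⟩ := inv5 h2 _ _ (Pinv_ne5 hr h) hy
      exact ⟨d, hr.trans hd⟩
  · exact inv5 h2 x y h hx

theorem iff5 {F : Type*} [Field F] (h2 : (2 : F) ≠ 0) (d : Fˣ) (v : M2 F × M2 F)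
    (h : Pinv v ≠ 0) : Rel5 (xd (d : F)) v ↔ ∃ c : Fˣ, Pinv v = (d : F) * (c : F) ^ 2 := by
  constructor
  · intro hr
    obtain ⟨c, hc⟩ := Pinv_rel5 hr
    refine ⟨Units.mk0 2 h2 * c, ?_⟩
    rw [hc, Pinv_xd5]
    simp only [Units.val_mul, Units.val_mk0]
    ring
  · rintro ⟨c, hc⟩
    obtain ⟨e, he⟩ := all5 h2 v h
    obtain ⟨k, hk⟩ := Pinv_rel5 he
    rw [Pinv_xd5, hc] at hk
    have hs : (c : F) * k / 2 ≠ 0 := div_ne_zero (mul_ne_zero c.ne_zero k.ne_zero) h2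
    have h4 : (4 : F) ≠ 0 := by
      have : (4 : F) = 2 * 2 := by norm_num
      rw [this]
      exact mul_ne_zero h2 h2
    have hE : (e : F) = d * ((c : F) * k / 2) ^ 2 := by
      apply mul_left_cancel₀ h4
      rw [hk]
      field_simp
      ring
    have := xd_sq5 (d : F) _ hs
    rw [← hE] at this
    exact this.trans he.symm

/-- in characteristic ≠ 2, (i) `P(x(d)) = 4d`; (ii) a regular element lies in
the `G`-orbit of `x(d)` iff `P = d·c²` for some `c ∈ Fˣ`; consequently every regular
element lies in some orbit of an `x(d)`, and two regular elements lie in the same orbit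
iff their `P`-values differ by a nonzero square. -/
theorem stmt5 {F : Type*} [Field F] (h2 : (2 : F) ≠ 0) :
    (∀ d : Fˣ, Pinv (xd (d : F)) = 4 * (d : F)) ∧
    (∀ (d : Fˣ) (v : M2 F × M2 F), Pinv v ≠ 0 →
      ((∃ g : GL (Fin 2) F × GL (Fin 2) F × GL (Fin 2) F, act (xd (d : F)) g = v) ↔
        ∃ c : Fˣ, Pinv v = (d : F) * (c : F) ^ 2)) ∧
    (∀ v : M2 F × M2 F, Pinv v ≠ 0 →
      ∃ (d : Fˣ) (g : GL (Fin 2) F × GL (Fin 2) F × GL (Fin 2) F), act (xd (d : F)) g = v) ∧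
    (∀ v w : M2 F × M2 F, Pinv v ≠ 0 → Pinv w ≠ 0 →
      ((∃ g : GL (Fin 2) F × GL (Fin 2) F × GL (Fin 2) F, act v g = w) ↔
        ∃ c : Fˣ, Pinv v = Pinv w * (c : F) ^ 2)) := by
  refine ⟨fun d => Pinv_xd5 _, fun d v h => iff5 h2 d v h, ?_, ?_⟩
  · intro v h
    obtain ⟨d, hd⟩ := all5 h2 v h
    exact ⟨d, hd.symm⟩
  · intro v w hv hw
    constructor
    · intro hr
      have hr' : Rel5 v w := hr
      exact Pinv_rel5 hr'.symm
    · rintro ⟨c, hc⟩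
      obtain ⟨d, hd⟩ := all5 h2 w hw
      obtain ⟨k, hk⟩ := (iff5 h2 d w hw).1 hd.symm
      have : Rel5 (xd (d : F)) v := (iff5 h2 d v hv).2 ⟨k * c, by
        rw [hc, hk, Units.val_mul]
        ring⟩
      exact this.symm.trans hd.symm
end

section
/- Let (x,y) ∈ V with P(x,y) ≠ 0. If P(x,y) is a square in Fˣ, then the G-orbit of (x,y) has cardinality q³(q+1)(q²−1)²/2 and the stabilizer of (x,y) in G has cardinality 2(q−1)⁴; if P(x,y) is a nonsquare in Fˣ, then the G-orbit of (x,y) has cardinality q³(q−1)³(q²−1)/2 and the stabilizer of (x,y) in G has cardinality 2(q²−1)². -/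
open Matrix

/-- The `G`-orbit of a point of `V`. -/
noncomputable def orbit {F : Type*} [Field F] (v : M2 F × M2 F) : Set (M2 F × M2 F) :=
  {w | ∃ g : GL (Fin 2) F × GL (Fin 2) F × GL (Fin 2) F, act v g = w}

/-- The stabilizer of a point of `V` in `G`. -/
noncomputable def stab {F : Type*} [Field F] (v : M2 F × M2 F) :
    Set (GL (Fin 2) F × GL (Fin 2) F × GL (Fin 2) F) :=
  {g | act v g = v}

namespace St14

variable {F : Type*} [Field F]

abbrev G3 (F : Type*) [Field F] := GL (Fin 2) F × GL (Fin 2) F × GL (Fin 2) F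

/-- The companion matrix. -/
def J (δ : F) : M2 F := !![0, δ; 1, 0]

lemma act_one (v : M2 F × M2 F) : act v 1 = v := by
  obtain ⟨x, y⟩ := v
  simp [act]

lemma act_mul (v : M2 F × M2 F) (g h : G3 F) : act v (g * h) = act (act v g) h := by
  obtain ⟨x, y⟩ := v
  obtain ⟨g1, g2, g3⟩ := g
  obtain ⟨h1, h2, h3⟩ := h
  simp only [act, Prod.mk_mul_mk, _root_.mul_inv_rev, Units.val_mul]
  have e : ∀ z : M2 F, ((h1⁻¹ : GL (Fin 2) F) : M2 F) * ((g1⁻¹ : GL (Fin 2) F) : M2 F) * z *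
      ((g2 : M2 F) * (h2 : M2 F)) =
      ((h1⁻¹ : GL (Fin 2) F) : M2 F) * (((g1⁻¹ : GL (Fin 2) F) : M2 F) * z * (g2 : M2 F)) * (h2 : M2 F) := by
    intro z; simp only [Matrix.mul_assoc]
  rw [e x, e y]
  simp only [Matrix.mul_apply, Fin.sum_univ_two, Matrix.mul_add, Matrix.add_mul, Matrix.mul_smul,
    Matrix.smul_mul]
  ext i j <;> simp only [Matrix.add_apply, Matrix.smul_apply, smul_eq_mul] <;> ring

noncomputable instance actInst : MulAction (G3 F)ᵐᵒᵖ (M2 F × M2 F) where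
  smul g v := act v g.unop
  one_smul v := act_one v
  mul_smul g h v := act_mul v h.unop g.unop

lemma orb_stab [Fintype F] (v : M2 F × M2 F) :
    Nat.card (orbit v) * Nat.card (stab v) = Nat.card (GL (Fin 2) F) ^ 3 := by
  have h := Nat.card_congr (MulAction.orbitProdStabilizerEquivGroup (G3 F)ᵐᵒᵖ v)
  rw [Nat.card_prod] at h
  have h1 : Nat.card (MulAction.orbit (G3 F)ᵐᵒᵖ v) = Nat.card (orbit v) := by
    have : MulAction.orbit (G3 F)ᵐᵒᵖ v = orbit v := by
      ext w
      constructor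
      · rintro ⟨g, rfl⟩; exact ⟨g.unop, rfl⟩
      · rintro ⟨g, rfl⟩; exact ⟨MulOpposite.op g, rfl⟩
    rw [this]
  have h2 : Nat.card (MulAction.stabilizer (G3 F)ᵐᵒᵖ v) = Nat.card (stab v) := by
    refine Nat.card_congr ⟨fun g => ⟨g.1.unop, g.2⟩, fun g => ⟨MulOpposite.op g.1, g.2⟩, ?_, ?_⟩
    · intro g; rfl
    · intro g; rfl
  have h3 : Nat.card (G3 F)ᵐᵒᵖ = Nat.card (GL (Fin 2) F) ^ 3 := by
    rw [← Nat.card_congr MulOpposite.opEquiv, Nat.card_prod, Nat.card_prod]; ring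
  rw [h1, h2, h3] at h
  exact h

lemma orbit_eq (v : M2 F × M2 F) (g : G3 F) : orbit (act v g) = orbit v := by
  ext w
  constructor
  · rintro ⟨h, rfl⟩; exact ⟨g * h, act_mul _ _ _⟩
  · rintro ⟨h, rfl⟩
    exact ⟨g⁻¹ * h, by rw [← act_mul, mul_inv_cancel_left]⟩

lemma stab_card_eq [Fintype F] (v : M2 F × M2 F) (g : G3 F) :
    Nat.card (stab (act v g)) = Nat.card (stab v) := by
  have h1 := orb_stab v
  have h2 := orb_stab (act v g)
  rw [orbit_eq, ← h1] at h2
  have : 0 < Nat.card (orbit v) := by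
    have : Nonempty (orbit v) := ⟨⟨v, 1, act_one v⟩⟩
    exact Nat.card_pos
  exact Nat.eq_of_mul_eq_mul_left this h2

lemma Pinv_lr (h k : M2 F) (x y : M2 F) :
    Pinv (h * x * k, h * y * k) = Pinv (x, y) * (h.det * k.det) ^ 2 := by
  have e : ∀ x y : M2 F, (h * x * k) * (h * y * k).adjugate =
      k.det • (h * (x * y.adjugate) * h.adjugate) := by
    intro x y
    rw [Matrix.adjugate_mul_distrib, Matrix.adjugate_mul_distrib]
    calc _ = h * x * (k * k.adjugate) * (y.adjugate * h.adjugate) := by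
          simp only [Matrix.mul_assoc]
      _ = _ := by
          rw [Matrix.mul_adjugate]
          simp [Matrix.mul_assoc]
  have : P0 (h * x * k, h * y * k) = k.det • (h * P0 (x, y) * h.adjugate) := by
    simp only [P0, e, Matrix.mul_sub, Matrix.sub_mul, smul_sub]
  simp only [Pinv, this, Matrix.det_smul, Matrix.det_mul, Matrix.det_adjugate, Fintype.card_fin]
  ring

lemma Pinv_mix (a b c d : F) (x y : M2 F) :
    Pinv (a • x + c • y, b • x + d • y) = Pinv (x, y) * (a * d - b * c) ^ 2 := by
  have : P0 (a • x + c • y, b • x + d • y) = (a * d - b * c) • P0 (x, y) := by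
    ext i j
    fin_cases i <;> fin_cases j <;>
      simp [P0, Matrix.adjugate_fin_two, Matrix.mul_apply, Fin.sum_univ_two] <;> ring
  simp only [Pinv, this, Matrix.det_smul, Fintype.card_fin]
  ring

lemma Pinv_act (v : M2 F × M2 F) (g : G3 F) : ∃ c : F, c ≠ 0 ∧ Pinv (act v g) = Pinv v * c ^ 2 := by
  obtain ⟨x, y⟩ := v
  obtain ⟨g1, g2, g3⟩ := g
  refine ⟨((g1⁻¹ : GL (Fin 2) F) : M2 F).det * (g2 : M2 F).det * (g3 : M2 F).det, ?_, ?_⟩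
  · exact mul_ne_zero (mul_ne_zero (Matrix.GeneralLinearGroup.det_ne_zero _)
      (Matrix.GeneralLinearGroup.det_ne_zero _)) (Matrix.GeneralLinearGroup.det_ne_zero _)
  · simp only [act]
    rw [Pinv_mix, Pinv_lr, Matrix.det_fin_two (g3 : M2 F)]
    ring

lemma Pinv_J (δ : F) : Pinv ((1 : M2 F), J δ) = 4 * δ := by
  simp [Pinv, P0, J, Matrix.det_fin_two, Matrix.adjugate_fin_two]
  ring

/-- Equivalence under the group. -/
def Rel (v w : M2 F × M2 F) : Prop := ∃ g : G3 F, act v g = w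

lemma Rel.trans {u v w : M2 F × M2 F} (h : Rel u v) (k : Rel v w) : Rel u w := by
  obtain ⟨g, rfl⟩ := h
  obtain ⟨h, rfl⟩ := k
  exact ⟨g * h, act_mul _ _ _⟩

lemma rel_mix (a b c d : F) (h : a * d - b * c ≠ 0) (x y : M2 F) :
    Rel (x, y) (a • x + c • y, b • x + d • y) := by
  refine ⟨(1, 1, Matrix.GeneralLinearGroup.mkOfDetNeZero !![a, b; c, d] ?_), ?_⟩
  · simpa [Matrix.det_fin_two] using h
  · simp [act, Matrix.GeneralLinearGroup.mkOfDetNeZero]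

lemma Pinv_formula (x y : M2 F) :
    Pinv (x, y) = ((x + y).det - x.det - y.det) ^ 2 - 4 * x.det * y.det := by
  simp [Pinv, P0, Matrix.det_fin_two, Matrix.adjugate_fin_two, Matrix.mul_apply, Fin.sum_univ_two]
  ring

lemma step1 (v : M2 F × M2 F) (hP : Pinv v ≠ 0) : ∃ w, Rel v w ∧ w.1.det ≠ 0 := by
  obtain ⟨x, y⟩ := v
  by_cases hx : x.det = 0
  · by_cases hy : y.det = 0
    · refine ⟨_, rel_mix 1 0 1 1 (by simp) x y, ?_⟩
      intro h
      apply hP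
      simp at h
      rw [Pinv_formula, h, hx, hy]; simp
    · exact ⟨_, rel_mix 0 1 1 0 (by simp) x y, by simpa using hy⟩
  · exact ⟨_, ⟨1, act_one _⟩, hx⟩

lemma step2 (w : M2 F × M2 F) (h : w.1.det ≠ 0) : ∃ y, Rel w (1, y) := by
  obtain ⟨x, y⟩ := w
  let g := Matrix.GeneralLinearGroup.mkOfDetNeZero x h
  have hg : (g : M2 F) = x := rfl
  refine ⟨((g⁻¹ : GL (Fin 2) F) : M2 F) * y, (g, 1, 1), ?_⟩
  have : ((g⁻¹ : GL (Fin 2) F) : M2 F) * x = 1 := by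
    rw [← hg, ← Units.val_mul, inv_mul_cancel, Units.val_one]
  simp only [act, this]
  simp

lemma step3 (h2 : (2 : F) ≠ 0) (y : M2 F) : ∃ a b c : F, Rel (1, y) (1, !![a, b; c, -a]) := by
  refine ⟨(y 0 0 - y 1 1) / 2, y 0 1, y 1 0, ?_⟩
  have := rel_mix 1 (-(y 0 0 + y 1 1) / 2) 0 1 (by simp) 1 y
  convert this using 2
  · simp
  · ext i j
    fin_cases i <;> fin_cases j <;> simp <;> field_simp <;> ring

lemma step4 (h2 : (2 : F) ≠ 0) (a b c : F) (h : Pinv (1, !![a, b; c, -a]) ≠ 0) :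
    ∃ δ, Rel (1, !![a, b; c, -a]) (1, J δ) := by
  have key : ∀ e f : F, e * (c * e - a * f) - f * (a * e + b * f) ≠ 0 →
      ∃ δ, Rel (1, !![a, b; c, -a]) (1, J δ) := by
    intro e f hef
    refine ⟨a ^ 2 + b * c, ?_⟩
    let g := Matrix.GeneralLinearGroup.mkOfDetNeZero !![e, a * e + b * f; f, c * e - a * f]
      (by rw [Matrix.det_fin_two_of]; intro h; apply hef; linear_combination h)
    have hg : (g : M2 F) = !![e, a * e + b * f; f, c * e - a * f] := rfl
    have hk : !![a, b; c, -a] * (g : M2 F) = (g : M2 F) * J (a ^ 2 + b * c) := by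
      rw [hg]
      ext i j
      fin_cases i <;> fin_cases j <;> simp [J] <;> ring
    refine ⟨(g, g, 1), ?_⟩
    have h1 : ((g⁻¹ : GL (Fin 2) F) : M2 F) * (g : M2 F) = 1 := by
      rw [← Units.val_mul]; simp
    have h3 : ((g⁻¹ : GL (Fin 2) F) : M2 F) * !![a, b; c, -a] * (g : M2 F) = J (a ^ 2 + b * c) := by
      rw [Matrix.mul_assoc, hk, ← Matrix.mul_assoc, h1, Matrix.one_mul]
    simp only [act, h3, Matrix.mul_one, h1]
    simp
  by_cases hc : c = 0
  · by_cases hb : b = 0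
    · apply key 1 1
      intro h'
      apply h
      have ha : a = 0 := by
        have : 2 * a = 0 := by rw [hc, hb] at h'; linear_combination -h'
        simpa [h2] using this
      subst hc hb ha
      simp [Pinv, P0, Matrix.det_fin_two, Matrix.adjugate_fin_two]
    · apply key 0 1
      simpa using hb
  · apply key 1 0
    simpa using hc

lemma normal_form (h2 : (2 : F) ≠ 0) (v : M2 F × M2 F) (hP : Pinv v ≠ 0) :
    ∃ δ, Rel v (1, J δ) := by
  obtain ⟨w, hw, hd⟩ := step1 v hP
  obtain ⟨y, hy⟩ := step2 w hd
  obtain ⟨a, b, c, habc⟩ := step3 h2 y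
  have hr := (hw.trans hy).trans habc
  have : Pinv (1, !![a, b; c, -a]) ≠ 0 := by
    obtain ⟨g, hg⟩ := hr
    rw [← hg]
    obtain ⟨k, hk, he⟩ := Pinv_act v g
    rw [he]
    exact mul_ne_zero hP (pow_ne_zero _ hk)
  obtain ⟨δ, hδ⟩ := step4 h2 a b c this
  exact ⟨δ, hr.trans hδ⟩

/-- Units of `F[t]/(t² - δ)` in coordinates. -/
abbrev S (δ : F) := {p : F × F // p.1 ^ 2 - δ * p.2 ^ 2 ≠ 0}

/-- Signs. -/
abbrev Eps (F : Type*) [Field F] := {e : F // e = 1 ∨ e = -1}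

lemma Eps.sq (e : Eps F) : e.1 * e.1 = 1 := by
  obtain ⟨e, rfl | rfl⟩ := e <;> simp

noncomputable def K (δ : F) (e : Eps F) (p : S δ) : GL (Fin 2) F :=
  Matrix.GeneralLinearGroup.mkOfDetNeZero !![p.1.1, e.1 * δ * p.1.2; p.1.2, e.1 * p.1.1] (by
    rw [Matrix.det_fin_two_of]
    intro h
    apply p.2
    linear_combination e.1 * h - (p.1.1 ^ 2 - δ * p.1.2 ^ 2) * e.sq)

lemma K_val (δ : F) (e : Eps F) (p : S δ) :
    (K δ e p : M2 F) = !![p.1.1, e.1 * δ * p.1.2; p.1.2, e.1 * p.1.1] := rfl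

def Eone : Eps F := ⟨1, Or.inl rfl⟩

lemma mem_stab_iff (δ : F) (g1 g2 g3 : GL (Fin 2) F) :
    (g1, g2, g3) ∈ stab ((1 : M2 F), J δ) ↔
      ((g3 : M2 F) 0 0 • 1 + (g3 : M2 F) 1 0 • J δ) * (g2 : M2 F) = g1 ∧
      ((g3 : M2 F) 0 1 • 1 + (g3 : M2 F) 1 1 • J δ) * (g2 : M2 F) = g1 * J δ := by
  have key : ∀ m z : M2 F, ((g1⁻¹ : GL (Fin 2) F) : M2 F) * m = z ↔ m = g1 * z := by
    intro m z
    constructor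
    · rintro rfl
      rw [← Matrix.mul_assoc, ← Units.val_mul]; simp
    · rintro rfl
      rw [← Matrix.mul_assoc, ← Units.val_mul]; simp
  have e : ∀ a b : F, a • (((g1⁻¹ : GL (Fin 2) F) : M2 F) * 1 * (g2 : M2 F)) +
      b • (((g1⁻¹ : GL (Fin 2) F) : M2 F) * J δ * (g2 : M2 F)) =
      ((g1⁻¹ : GL (Fin 2) F) : M2 F) * ((a • 1 + b • J δ) * (g2 : M2 F)) := by
    intro a b
    simp [Matrix.add_mul, Matrix.mul_add, Matrix.mul_assoc]
  simp only [stab, Set.mem_ofPred_eq, act, Prod.mk.injEq]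
  rw [e, e, key, key, Matrix.mul_one]

noncomputable def f (δ : F) (t : Eps F × S δ × S δ) : stab ((1 : M2 F), J δ) :=
  ⟨(K δ Eone t.2.1 * K δ t.1 t.2.2, K δ t.1 t.2.2, K δ t.1 t.2.1), by
    obtain ⟨e, ⟨⟨a, c⟩, h⟩, ⟨⟨p, r⟩, h'⟩⟩ := t
    have := e.sq
    rw [mem_stab_iff]
    constructor
    · simp only [Units.val_mul, K_val]
      congr 1
      ext i j
      fin_cases i <;> fin_cases j <;> simp [J, Eone] <;> ring
    · simp only [Units.val_mul, K_val]
      ext i j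
      fin_cases i <;> fin_cases j <;>
        simp [J, Eone, Matrix.mul_apply, Fin.sum_univ_two] <;> grind⟩

lemma f_inj (δ : F) (hδ : δ ≠ 0) : Function.Injective (f δ) := by
  rintro ⟨e, ⟨⟨a, c⟩, h⟩, ⟨⟨p, r⟩, k⟩⟩ ⟨e', ⟨⟨a', c'⟩, h'⟩, ⟨⟨p', r'⟩, k'⟩⟩ heq
  have h1 := congrArg (fun z => (z.1.2.1 : M2 F)) heq
  have h2 := congrArg (fun z => (z.1.2.2 : M2 F)) heq
  simp only [f, K_val] at h1 h2
  have a1 := congrFun (congrFun h1 0) 0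
  have a2 := congrFun (congrFun h1 1) 0
  have b1 := congrFun (congrFun h2 0) 0
  have b2 := congrFun (congrFun h2 1) 0
  have b3 := congrFun (congrFun h2 0) 1
  have b4 := congrFun (congrFun h2 1) 1
  simp at a1 a2 b1 b2 b3 b4
  subst a1 a2 b1 b2
  have : e = e' := by
    apply Subtype.ext
    by_contra hne
    have hne' := sub_ne_zero.mpr hne
    apply h
    have ha : a = 0 := by
      have : (e.1 - e'.1) * a = 0 := by linear_combination b4
      simpa [hne'] using this
    have hc : c = 0 := by
      have : (e.1 - e'.1) * (δ * c) = 0 := by linear_combination b3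
      simpa [hne', hδ] using this
    simp [ha, hc]
  subst this
  rfl

lemma f_surj (δ : F) (hδ : δ ≠ 0) (h2 : (2 : F) ≠ 0) : Function.Surjective (f δ) := by
  rintro ⟨⟨g1, g2, g3⟩, hg⟩
  have hg' := hg
  rw [mem_stab_iff] at hg'
  obtain ⟨E1, E2⟩ := hg'
  rw [← E1] at E2
  have d1 := Matrix.GeneralLinearGroup.det_ne_zero g1
  have d2 := Matrix.GeneralLinearGroup.det_ne_zero g2
  rw [← E1, Matrix.det_mul] at d1
  have d3 := left_ne_zero_of_mul d1
  have q1 := congrFun (congrFun E2 0) 0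
  have q2 := congrFun (congrFun E2 0) 1
  have q3 := congrFun (congrFun E2 1) 0
  have q4 := congrFun (congrFun E2 1) 1
  have dE := congrArg Matrix.det E2
  rw [Matrix.det_mul, Matrix.det_mul, Matrix.det_mul, mul_right_comm] at dE
  have dE := mul_right_cancel₀ d2 dE
  rw [Matrix.det_fin_two] at d2
  simp only [Matrix.det_fin_two] at dE d3
  simp [J, Matrix.mul_apply, Fin.sum_univ_two] at q1 q2 q3 q4 dE d3
  obtain ⟨a, ha⟩ : ∃ a, a = (g3 : M2 F) 0 0 := ⟨_, rfl⟩
  obtain ⟨b, hb⟩ : ∃ a, a = (g3 : M2 F) 0 1 := ⟨_, rfl⟩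
  obtain ⟨c, hc⟩ : ∃ a, a = (g3 : M2 F) 1 0 := ⟨_, rfl⟩
  obtain ⟨d, hd⟩ : ∃ a, a = (g3 : M2 F) 1 1 := ⟨_, rfl⟩
  obtain ⟨p, hp⟩ : ∃ a, a = (g2 : M2 F) 0 0 := ⟨_, rfl⟩
  obtain ⟨s, hs⟩ : ∃ a, a = (g2 : M2 F) 0 1 := ⟨_, rfl⟩
  obtain ⟨r, hr⟩ : ∃ a, a = (g2 : M2 F) 1 0 := ⟨_, rfl⟩
  obtain ⟨t, ht⟩ : ∃ a, a = (g2 : M2 F) 1 1 := ⟨_, rfl⟩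
  simp only [← ha, ← hb, ← hc, ← hd, ← hp, ← hs, ← hr, ← ht] at q1 q2 q3 q4 dE d3 d2
  have n0 : a ^ 2 - δ * c ^ 2 ≠ 0 := by
    intro h; apply d3; linear_combination h
  have tr : a * b = c * d * δ := by
    have : (2 * (p * t - s * r)) * (a * b - c * d * δ) = 0 := by
      linear_combination (t * a + s * c) * q1 + (-t * c * δ - s * a) * q3 +
        (-r * a - p * c) * q2 + (r * c * δ + p * a) * q4
    have := (mul_eq_zero.mp this).resolve_left (mul_ne_zero h2 d2)
    linear_combination this
  have dE' : b ^ 2 - δ * d ^ 2 = -δ * (a ^ 2 - δ * c ^ 2) := by linear_combination dE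
  obtain ⟨e, he, hb', hd'⟩ : ∃ e : F, (e = 1 ∨ e = -1) ∧ b = e * δ * c ∧ d = e * a := by
    by_cases ha0 : a = 0
    · have hc0 : c ≠ 0 := by
        rintro rfl; apply n0; simp [ha0]
      have hd0 : d = 0 := by
        have : (c * δ) * d = 0 := by rw [ha0] at tr; linear_combination -tr
        simpa [hc0, hδ] using this
      have : b ^ 2 = (δ * c) ^ 2 := by
        rw [ha0, hd0] at dE'; linear_combination dE'
      rcases sq_eq_sq_iff_eq_or_eq_neg.mp this with h | h
      · exact ⟨1, Or.inl rfl, by rw [h]; ring, by rw [hd0, ha0]; ring⟩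
      · exact ⟨-1, Or.inr rfl, by rw [h]; ring, by rw [hd0, ha0]; ring⟩
    · have : d ^ 2 = a ^ 2 := by
        have h : (δ * (a ^ 2 - δ * c ^ 2)) * (d ^ 2 - a ^ 2) = 0 := by
          linear_combination (a * b + c * d * δ) * tr - a ^ 2 * dE'
        have := (mul_eq_zero.mp h).resolve_left (mul_ne_zero hδ n0)
        linear_combination this
      rcases sq_eq_sq_iff_eq_or_eq_neg.mp this with h | h
      · refine ⟨1, Or.inl rfl, ?_, by rw [h]; ring⟩
        apply mul_left_cancel₀ ha0
        rw [tr, h]; ring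
      · refine ⟨-1, Or.inr rfl, ?_, by rw [h]; ring⟩
        apply mul_left_cancel₀ ha0
        rw [tr, h]; ring
  have hee : e * e = 1 := by rcases he with rfl | rfl <;> simp
  have hs' : s = e * δ * r := by
    have : (a ^ 2 - δ * c ^ 2) * (e * δ * r - s) = 0 := by
      rw [hb', hd'] at q1 q3
      linear_combination a * q1 - c * δ * q3
    have := (mul_eq_zero.mp this).resolve_left n0
    linear_combination -this
  have ht' : t = e * p := by
    have : (a ^ 2 - δ * c ^ 2) * (e * p - t) = 0 := by
      rw [hb', hd'] at q1 q3
      linear_combination a * q3 - c * q1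
    have := (mul_eq_zero.mp this).resolve_left n0
    linear_combination -this
  have n1 : p ^ 2 - δ * r ^ 2 ≠ 0 := by
    intro h
    apply d2
    rw [hs', ht']
    linear_combination e * h
  have k2 : K δ ⟨e, he⟩ ⟨(p, r), n1⟩ = g2 := by
    apply Units.ext
    rw [K_val]
    ext i j
    fin_cases i <;> fin_cases j <;> simp [← hp, ← hs, ← hr, ← ht, hs', ht']
  have k3 : K δ ⟨e, he⟩ ⟨(a, c), n0⟩ = g3 := by
    apply Units.ext
    rw [K_val]
    ext i j
    fin_cases i <;> fin_cases j <;> simp [← ha, ← hb, ← hc, ← hd, hb', hd']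
  have k1 : K δ Eone ⟨(a, c), n0⟩ * g2 = g1 := by
    apply Units.ext
    rw [Units.val_mul, ← E1, K_val]
    congr 1
    ext i j
    fin_cases i <;> fin_cases j <;> simp [J, Eone, mul_comm, ← ha, ← hc]
  refine ⟨(⟨e, he⟩, ⟨(a, c), n0⟩, ⟨(p, r), n1⟩), ?_⟩
  apply Subtype.ext
  simp only [f, k2, k3, k1]

lemma card_stab_J (δ : F) (hδ : δ ≠ 0) (h2 : (2 : F) ≠ 0) :
    Nat.card (stab ((1 : M2 F), J δ)) = 2 * Nat.card (S δ) ^ 2 := by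
  rw [← Nat.card_congr (Equiv.ofBijective (f δ) ⟨f_inj δ hδ, f_surj δ hδ h2⟩), Nat.card_prod,
    Nat.card_prod]
  have : Nat.card (Eps F) = 2 := by
    have hh : ({1, -1} : Set F).ncard = 2 := by
      apply Set.ncard_pair
      intro h
      apply h2
      linear_combination h
    exact hh
  rw [this]; ring

lemma card_S_sq [Fintype F] (s : F) (hs : s ≠ 0) (h2 : (2 : F) ≠ 0) :
    Nat.card (S (s ^ 2)) = (Fintype.card F - 1) ^ 2 := by
  have e : S (s ^ 2) ≃ Fˣ × Fˣ :=
    { toFun := fun p => (Units.mk0 (p.1.1 - s * p.1.2) (by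
          intro h; apply p.2; linear_combination (p.1.1 + s * p.1.2) * h),
        Units.mk0 (p.1.1 + s * p.1.2) (by
          intro h; apply p.2; linear_combination (p.1.1 - s * p.1.2) * h))
      invFun := fun u => ⟨((u.1.1 + u.2.1) / 2, (u.2.1 - u.1.1) / (2 * s)), by
        have : ((u.1.1 + u.2.1) / 2) ^ 2 - s ^ 2 * ((u.2.1 - u.1.1) / (2 * s)) ^ 2
          = u.1.1 * u.2.1 := by field_simp; ring
        simp only [this]
        exact mul_ne_zero u.1.ne_zero u.2.ne_zero⟩
      left_inv := by
        rintro ⟨⟨a, b⟩, h⟩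
        apply Subtype.ext
        ext
        · simp; field_simp; ring
        · simp; field_simp; ring
      right_inv := by
        rintro ⟨u, v⟩
        ext
        · simp; field_simp; ring
        · simp; field_simp; ring }
  rw [Nat.card_congr e, Nat.card_prod, Nat.card_units, Nat.card_eq_fintype_card]; ring

lemma card_S_nonsq [Fintype F] (δ : F) (h : ¬ ∃ s, δ = s ^ 2) :
    Nat.card (S δ) = Fintype.card F ^ 2 - 1 := by
  have e : Nat.card (S δ) = Set.ncard ({(0, 0)}ᶜ : Set (F × F)) := by
    have : {p : F × F | p.1 ^ 2 - δ * p.2 ^ 2 ≠ 0} = {(0, 0)}ᶜ := by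
      ext ⟨a, b⟩
      simp only [Set.mem_setOf_eq, Set.mem_compl_iff, Set.mem_singleton_iff, not_iff_not,
        Prod.mk.injEq]
      constructor
      · intro hh
        have hb : b = 0 := by
          by_contra hb
          apply h
          refine ⟨a / b, ?_⟩
          field_simp
          linear_combination -hh
        subst hb
        simpa using hh
      · rintro ⟨rfl, rfl⟩; simp
    rw [← this]; rfl
  rw [e, Set.ncard_compl, Set.ncard_singleton, Nat.card_prod, Nat.card_eq_fintype_card]; ring_nf

end St14

/-- over a finite field of odd cardinality `q`, a regular element whose
invariant `P` is a (nonzero) square has orbit of size `q³(q+1)(q²−1)²/2` and stabilizer of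
size `2(q−1)⁴`; if `P` is a nonsquare, the orbit has size `q³(q−1)³(q²−1)/2` and the
stabilizer has size `2(q²−1)²`. -/
theorem stmt14 (F : Type*) [Field F] [Fintype F] (q : ℕ)
    (hq : Fintype.card F = q) (hodd : Odd q)
    (v : M2 F × M2 F) (hP : Pinv v ≠ 0) :
    ((∃ c : F, c ≠ 0 ∧ Pinv v = c ^ 2) →
      2 * Nat.card (orbit v) = q ^ 3 * (q + 1) * (q ^ 2 - 1) ^ 2 ∧
        Nat.card (stab v) = 2 * (q - 1) ^ 4) ∧
    ((¬ ∃ c : F, c ≠ 0 ∧ Pinv v = c ^ 2) →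
      2 * Nat.card (orbit v) = q ^ 3 * (q - 1) ^ 3 * (q ^ 2 - 1) ∧
        Nat.card (stab v) = 2 * (q ^ 2 - 1) ^ 2) := by
  have h2 : (2 : F) ≠ 0 := by
    apply Ring.two_ne_zero
    intro hc
    have := FiniteField.even_card_of_char_two hc
    rw [hq] at this
    rcases hodd with ⟨k, hk⟩
    omega
  have h1q : 1 ≤ q := hodd.pos
  obtain ⟨δ, g, hg⟩ := St14.normal_form h2 v hP
  obtain ⟨k, hk, hPk⟩ := St14.Pinv_act v g
  rw [hg, St14.Pinv_J] at hPk
  have h4 : (4 : F) ≠ 0 := by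
    have : (4 : F) = 2 * 2 := by norm_num
    rw [this]; exact mul_ne_zero h2 h2
  have hδ : δ ≠ 0 := by
    rintro rfl
    rw [mul_zero] at hPk
    exact mul_ne_zero hP (pow_ne_zero 2 hk) hPk.symm
  have hst : Nat.card (stab v) = 2 * Nat.card (St14.S δ) ^ 2 := by
    rw [← St14.stab_card_eq v g, hg, St14.card_stab_J δ hδ h2]
  have hos := St14.orb_stab v
  have hGL : Nat.card (GL (Fin 2) F) = (q ^ 2 - 1) * (q ^ 2 - q) := by
    rw [Matrix.card_GL_field, Fin.prod_univ_two, hq]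
    simp
  obtain ⟨m, rfl⟩ : ∃ m, q = m + 1 := ⟨q - 1, by omega⟩
  have hm : 0 < m := by
    have : 1 < Fintype.card F := Fintype.one_lt_card
    omega
  have e1 : (m + 1) ^ 2 - 1 = m * (m + 2) := by
    rw [Nat.sub_eq_iff_eq_add (Nat.one_le_pow _ _ (by omega))]; ring
  have e2 : (m + 1) ^ 2 - (m + 1) = m * (m + 1) := by
    rw [Nat.sub_eq_iff_eq_add (by nlinarith)]; ring
  rw [hst, hGL, e1, e2] at hos
  constructor
  · rintro ⟨c, hc, hPc⟩
    have hS : Nat.card (St14.S δ) = m ^ 2 := by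
      have : δ = (c * k / 2) ^ 2 := by
        field_simp
        rw [hPc] at hPk
        linear_combination hPk
      rw [this, St14.card_S_sq _ (div_ne_zero (mul_ne_zero hc hk) h2) h2, hq, Nat.add_sub_cancel]
    rw [hS] at hst hos
    refine ⟨?_, by rw [hst, Nat.add_sub_cancel]; ring⟩
    rw [e1]
    apply Nat.eq_of_mul_eq_mul_left (pow_pos hm 4)
    linarith
  · intro hns
    have hS : Nat.card (St14.S δ) = m * (m + 2) := by
      rw [St14.card_S_nonsq, hq, e1]
      rintro ⟨s, rfl⟩
      apply hns
      have hs : s ≠ 0 := by rintro rfl; simp at hδ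
      refine ⟨2 * s / k, div_ne_zero (mul_ne_zero h2 hs) hk, ?_⟩
      field_simp
      linear_combination -hPk
    rw [hS] at hst hos
    refine ⟨?_, by rw [hst, e1]⟩
    rw [e1, Nat.add_sub_cancel]
    apply Nat.eq_of_mul_eq_mul_left (pow_pos (mul_pos hm (by omega : 0 < m + 2)) 2)
    linarith
end
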